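/- Let M ≥ 0, N ≥ 1, ℓ ∈ ℂ^N, k ∈ I_{M,N}, i ∈ {1,…,M}, x ∈ ℂ and t ∈ ℂ^N. At every point where all theta factors in the denominators of u_{k;i}(x;t) and u_{k;i}(x−τ;t) are nonzero, one has u_{k;i}(x − τ; t) = q² e^{2(ξ̃₊ + ξ̃₋) − 4(M − i)η} · u_{k;i}(x; t). -/

import Mathlib

open Complex MeasureTheory

noncomputable section

namespace BQKZ

/-- `(z;p)_∞ = ∏_{m ≥ 0} (1 - z pᵐ)`; used with `p = q²`. -/
def poch (p z : ℂ) : ℂ := ∏' m : ℕ, (1 - z * p ^ m)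

/-- renormalized Jacobi theta `θ(z) = (z;p)_∞ (p z⁻¹;p)_∞`, with `p = q²`. -/
def theta (p z : ℂ) : ℂ := poch p z * poch p (p * z⁻¹)

/-- `q² = e^{2τ}` where `q = e^τ`. -/
def qsq (τ : ℂ) : ℂ := exp (2 * τ)

/-- `ξ̃₊ = ξ₊ - η/2 - τ/2`. -/
def xiP (τ η ξp : ℂ) : ℂ := ξp - η / 2 - τ / 2

/-- `ξ̃₋ = ξ₋ - η/2`. -/
def xiM (η ξm : ℂ) : ℂ := ξm - η / 2

/-- `n_k(r) = #{i : k i = r}`. -/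
def nk {M N : ℕ} (k : Fin M → Fin N) (r : Fin N) : ℕ :=
  (Finset.univ.filter fun i => k i = r).card

/-- `φ_{k;r}`. -/
def phiC (η ξp ξm : ℂ) {N M : ℕ} (ℓ : Fin N → ℂ) (k : Fin M → Fin N) (r : Fin N) : ℂ :=
  (∏ i ∈ Finset.univ.filter fun i : Fin M => k i = r,
      exp (2 * (η - ξp - ξm) +
        4 * ((M : ℂ) - ((i : ℕ) + 1) - ∑ s ∈ Finset.univ.filter fun s : Fin N => r ≤ s, ℓ s) * η)) *
    exp (-4 * ℓ r * η * ((Finset.univ.filter fun i : Fin M => r < k i).card : ℂ))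

/-- `Φ_k(t)`. -/
def PhiF (τ η ξp ξm : ℂ) {N M : ℕ} (ℓ : Fin N → ℂ) (k : Fin M → Fin N) (t : Fin N → ℂ) : ℂ :=
  ∏ r, theta (qsq τ) (exp (2 * t r)) / theta (qsq τ) (phiC η ξp ξm ℓ k r * exp (2 * t r))

/-- `F(x;t)`. -/
def Ffun (τ η : ℂ) {N : ℕ} (ℓ : Fin N → ℂ) (x : ℂ) (t : Fin N → ℂ) : ℂ :=
  ∏ s, (poch (qsq τ) (exp (-2 * (t s + x - ℓ s * η))) * poch (qsq τ) (exp (-2 * (t s - x - ℓ s * η)))) /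
       (poch (qsq τ) (exp (-2 * (t s + x + ℓ s * η))) * poch (qsq τ) (exp (-2 * (t s - x + ℓ s * η))))

/-- `g(x)`. -/
def gfun (τ η ξp ξm : ℂ) (x : ℂ) : ℂ :=
  (poch (qsq τ) (qsq τ * exp (2 * (xiP τ η ξp - x))) * poch (qsq τ) (qsq τ * exp (2 * (xiM η ξm - x)))) /
  (poch (qsq τ) (exp (2 * (-xiP τ η ξp - x))) * poch (qsq τ) (exp (2 * (-xiM η ξm - x))))

/-- `h(x)`. -/
def hfun (τ η : ℂ) (x : ℂ) : ℂ :=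
  (1 - exp (-2 * x)) * poch (qsq τ) (qsq τ * exp (-2 * (x + η))) / poch (qsq τ) (exp (-2 * (x - η)))

/-- `ψ_{k;i}`. -/
def psiC (τ η ξp ξm : ℂ) {N M : ℕ} (ℓ : Fin N → ℂ) (k : Fin M → Fin N) (i : Fin M) : ℂ :=
  xiP τ η ξp + xiM η ξm + τ + ℓ (k i) * η +
    2 * ((∑ s ∈ Finset.univ.filter fun s : Fin N => k i < s, ℓ s) - (M : ℂ) + ((i : ℕ) + 1)) * η

/-- `u_{k;i}(x;t)`. -/
def ufun (τ η ξp ξm : ℂ) {N M : ℕ} (ℓ : Fin N → ℂ) (k : Fin M → Fin N) (i : Fin M) (x : ℂ)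
    (t : Fin N → ℂ) : ℂ :=
  exp (-t (k i)) * theta (qsq τ) (exp (2 * (x - t (k i) + psiC τ η ξp ξm ℓ k i))) *
    (∏ s ∈ Finset.univ.filter fun s : Fin N => k i < s,
      theta (qsq τ) (exp (2 * (x - t s - ℓ s * η)))) /
    ∏ s ∈ Finset.univ.filter fun s : Fin N => k i ≤ s,
      theta (qsq τ) (exp (2 * (x - t s + ℓ s * η)))

/-- `w_k(x;t)/Φ_k(t)` (the weight function with the `Φ_k` prefactor cancelled). -/
def w0 (τ η ξp ξm : ℂ) {N M : ℕ} (ℓ : Fin N → ℂ) (k : Fin M → Fin N) (x : Fin M → ℂ)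
    (t : Fin N → ℂ) : ℂ :=
  (∏ i, Ffun τ η ℓ (x i) t * gfun τ η ξp ξm (x i) * ufun τ η ξp ξm ℓ k i (x i) t) *
    ∏ p ∈ Finset.univ.filter fun p : Fin M × Fin M => p.1 < p.2,
      hfun τ η (x p.1 + x p.2) * hfun τ η (x p.1 - x p.2)

/-- the weight function `w_k(x;t)`. -/
def wfun (τ η ξp ξm : ℂ) {N M : ℕ} (ℓ : Fin N → ℂ) (k : Fin M → Fin N) (x : Fin M → ℂ)
    (t : Fin N → ℂ) : ℂ :=
  PhiF τ η ξp ξm ℓ k t * w0 τ η ξp ξm ℓ k x t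

/-- sign `ε_i = ±1` encoded by a boolean. -/
def sg {M : ℕ} (ε : Fin M → Bool) (i : Fin M) : ℂ := if ε i then 1 else -1

/-- `S_M k`: rearrangements of `k`. -/
def rearr {M N : ℕ} (k : Fin M → Fin N) : Finset (Fin M → Fin N) :=
  Finset.univ.filter fun m => ∀ r, nk m r = nk k r

/-- `β_k(x;t)`, the coefficients of the boundary Bethe vectors. -/
def betaF (η ξm : ℂ) {N M : ℕ} (ℓ : Fin N → ℂ) (k : Fin M → Fin N) (x : Fin M → ℂ)
    (t : Fin N → ℂ) : ℂ :=
  exp ((∑ i, ((nk k (k i) : ℂ) / 2 - ℓ (k i))) * η) *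
    ∑ m ∈ rearr k, ∑ ε : Fin M → Bool,
      (∏ i,
          sg ε i * sinh (sg ε i * x i - xiM η ξm) / sinh (t (m i) + sg ε i * x i - ℓ (m i) * η) *
            (∏ s ∈ Finset.univ.filter fun s : Fin N => m i < s,
              sinh (t s + sg ε i * x i + ℓ s * η) / sinh (t s + sg ε i * x i - ℓ s * η)) *
            ∏ s, sinh (t s - sg ε i * x i + ℓ s * η) / sinh (t s - sg ε i * x i - ℓ s * η)) *
        (∏ p ∈ Finset.univ.filter fun p : Fin M × Fin M => p.1 < p.2,
          sinh (sg ε p.1 * x p.1 + sg ε p.2 * x p.2 + η) /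
            sinh (sg ε p.1 * x p.1 + sg ε p.2 * x p.2)) *
        ∏ p ∈ Finset.univ.filter fun p : Fin M × Fin M => m p.1 < m p.2,
          sinh (sg ε p.1 * x p.1 - sg ε p.2 * x p.2 - η) /
            sinh (sg ε p.1 * x p.1 - sg ε p.2 * x p.2)

/-- `(ℓ,η) ∈ D^k_{M,N}`. -/
def Dmn (η : ℂ) {N M : ℕ} (ℓ : Fin N → ℂ) (k : Fin M → Fin N) : Prop :=
  ∀ r, (ℓ r * η).re > max 0 (((nk k r : ℝ) - 1) / 2 * η.re)

/-- the (0-based) position `i_k(s;r) = ∑_{s' < r} n_k(s') + s`. -/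
def blockIdx {M N : ℕ} (k : Fin M → Fin N) (r : Fin N) (s : ℕ) : ℕ :=
  (∑ s' ∈ Finset.univ.filter fun s' : Fin N => s' < r, nk k s') + s

/-- `γ ∈ Γ^k_{M,N}`. -/
def Gam (η : ℂ) {N M : ℕ} (ℓ : Fin N → ℂ) (k : Fin M → Fin N) (γ : Fin M → ℂ) : Prop :=
  (∀ i, -(ℓ (k i) * η).re < (γ i).re ∧ (γ i).re < (ℓ (k i) * η).re) ∧
    ∀ r : Fin N, ∀ s : ℕ, s + 1 < nk k r →
      ∀ (h1 : blockIdx k r s < M) (h2 : blockIdx k r (s + 1) < M),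
        (γ ⟨blockIdx k r (s + 1), h2⟩).re ≤ (γ ⟨blockIdx k r s, h1⟩).re ∧
          (γ ⟨blockIdx k r (s + 1), h2⟩).re + η.re < (γ ⟨blockIdx k r s, h1⟩).re

/-- `γ ∈ Γ^k_{M,N;τ}`. -/
def GamTau (τ η : ℂ) {N M : ℕ} (ℓ : Fin N → ℂ) (k : Fin M → Fin N) (γ : Fin M → ℂ) : Prop :=
  Gam η ℓ k γ ∧
    (∀ i, -(ℓ (k i) * η + τ).re < (γ i).re ∧ (γ i).re < (ℓ (k i) * η + τ).re) ∧
    ∀ r : Fin N, ∀ s : ℕ, s + 1 < nk k r →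
      ∀ (h1 : blockIdx k r s < M) (h2 : blockIdx k r (s + 1) < M),
        (γ ⟨blockIdx k r (s + 1), h2⟩).re + (η - τ).re < (γ ⟨blockIdx k r s, h1⟩).re

/-- `Λ₊ = max_s Re(ℓ_s η)`. -/
def Lam (η : ℂ) {N : ℕ} (ℓ : Fin N → ℂ) : ℝ := ⨆ s, (ℓ s * η).re

/-- the sector `Ã`. -/
def Atil (τ η ξp ξm : ℂ) {N : ℕ} (ℓ : Fin N → ℂ) : Set (Fin N → ℂ) :=
  {t | (∀ i j : Fin N, (j : ℕ) = (i : ℕ) + 1 → (t i - t j).re > 2 * Lam η ℓ + max η.re 0) ∧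
       ∀ i : Fin N, (i : ℕ) = N - 1 →
         (t i).re > Lam η ℓ + max (max (η / 2).re 0) (max (-xiP τ η ξp).re (-xiM η ξm).re)}

/-- the sector `Ã_τ`. -/
def AtilTau (τ η ξp ξm : ℂ) {N : ℕ} (ℓ : Fin N → ℂ) : Set (Fin N → ℂ) :=
  {t | (∀ i j : Fin N, (j : ℕ) = (i : ℕ) + 1 →
          (t i - t j).re > 2 * Lam η ℓ + max η.re 0 - τ.re) ∧
       ∀ i : Fin N, (i : ℕ) = N - 1 →
         (t i).re > Lam η ℓ + max (max (η / 2).re 0) (max (-xiP τ η ξp).re (-xiM η ξm).re) - τ.re}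

/-- the cone `Q₊ ⊂ ℤ^N` spanned by the simple roots `e_i - e_{i+1}` and `e_N`. -/
def Qplus {N : ℕ} : Set (Fin N → ℤ) :=
  {α | ∃ β : Fin N → ℕ, ∀ j : Fin N,
    α j = (β j : ℤ) -
      if _h : 0 < (j : ℕ) then
        (β ⟨(j : ℕ) - 1, lt_of_le_of_lt (Nat.sub_le _ _) j.isLt⟩ : ℤ)
      else 0}

/-- the cube `[0,π]^M` over which the contour integrals are iterated. -/
def box (M : ℕ) : Set (Fin M → ℝ) := Set.univ.pi fun _ => Set.Icc (0 : ℝ) Real.pi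

/-- the point of the contour `C^γ_k(t)` with parameters `s ∈ [0,π]^M`. -/
def cpt {M N : ℕ} (k : Fin M → Fin N) (γ : Fin M → ℂ) (t : Fin N → ℂ) (s : Fin M → ℝ) :
    Fin M → ℂ := fun i => t (k i) + γ i + (s i : ℂ) * I

/-- the iterated contour integral over `C^γ_k(t)`. -/
def contourIntegral {M N : ℕ} (k : Fin M → Fin N) (γ : Fin M → ℂ) (t : Fin N → ℂ)
    (f : (Fin M → ℂ) → ℂ) : ℂ :=
  I ^ M * ∫ s in box M, f (cpt k γ t s)

/-- nonvanishing of all denominators occurring in `w_k(x;t)/Φ_k(t)`. -/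
def w0DenomOK (τ η ξp ξm : ℂ) {N M : ℕ} (ℓ : Fin N → ℂ) (k : Fin M → Fin N) (x : Fin M → ℂ)
    (t : Fin N → ℂ) : Prop :=
  (∀ s : Fin N, ∀ i : Fin M,
      poch (qsq τ) (exp (-2 * (t s + x i + ℓ s * η))) ≠ 0 ∧
      poch (qsq τ) (exp (-2 * (t s - x i + ℓ s * η))) ≠ 0) ∧
  (∀ i : Fin M,
      poch (qsq τ) (exp (2 * (-xiP τ η ξp - x i))) ≠ 0 ∧
      poch (qsq τ) (exp (2 * (-xiM η ξm - x i))) ≠ 0) ∧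
  (∀ i : Fin M, ∀ s : Fin N, k i ≤ s → theta (qsq τ) (exp (2 * (x i - t s + ℓ s * η))) ≠ 0) ∧
  ∀ i j : Fin M, i < j →
      poch (qsq τ) (exp (-2 * (x i + x j - η))) ≠ 0 ∧
      poch (qsq τ) (exp (-2 * (x i - x j - η))) ≠ 0

/-- nonvanishing of the theta denominators of `Φ_k(t)`. -/
def PhiDenomOK (τ η ξp ξm : ℂ) {N M : ℕ} (ℓ : Fin N → ℂ) (k : Fin M → Fin N)
    (t : Fin N → ℂ) : Prop :=
  ∀ r, theta (qsq τ) (phiC η ξp ξm ℓ k r * exp (2 * t r)) ≠ 0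

/-- nonvanishing of all sinh denominators occurring in `β_m(x;t)` (for any rearrangement `m`). -/
def betaDenomOK (η : ℂ) {N M : ℕ} (ℓ : Fin N → ℂ) (x : Fin M → ℂ) (t : Fin N → ℂ) : Prop :=
  (∀ s : Fin N, ∀ i : Fin M,
      sinh (t s + x i - ℓ s * η) ≠ 0 ∧ sinh (t s - x i - ℓ s * η) ≠ 0) ∧
  ∀ i j : Fin M, i < j → sinh (x i + x j) ≠ 0 ∧ sinh (x i - x j) ≠ 0

/-!
The theta function satisfies `θ(q⁻² z) = -q⁻² z θ(z)`, so under `x ↦ x - τ` a quotient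
`∏ₛ θ(e^{2(x + aₛ)}) / ∏ₛ θ(e^{2(x + bₛ)})` with equally many factors above and below only picks up
the constant `e^{2 ∑ₛ (aₛ - bₛ)}`: the dependence on `x` cancels factor by factor. Up to the factor
`e^{-t_{kᵢ}}`, `u_{k;i}(x;t)` is such a quotient, indexed by `s ≥ kᵢ`, and the shift `ψ_{k;i}` is
chosen so that the `ℓ`-dependence of `∑ₛ (aₛ - bₛ)` cancels.
-/

lemma multipliable_one_sub_mul_pow {𝕜 : Type*} [NormedField 𝕜] [CompleteSpace 𝕜] {p : 𝕜}
    (hp : ‖p‖ < 1) (z : 𝕜) : Multipliable fun m : ℕ => 1 - z * p ^ m := by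
  have hsum : Summable fun m : ℕ => ‖-(z * p ^ m)‖ := by
    simpa only [norm_neg, norm_mul, norm_pow] using
      (summable_geometric_of_lt_one (norm_nonneg p) hp).mul_left ‖z‖
  simpa only [sub_eq_add_neg] using multipliable_one_add_of_summable hsum

lemma poch_eq_one_sub_mul_poch {p : ℂ} (hp : ‖p‖ < 1) (z : ℂ) :
    poch p z = (1 - z) * poch p (z * p) := by
  have hshift (m : ℕ) : z * p ^ (m + 1) = z * p * p ^ m := by rw [pow_succ', mul_assoc]
  have htail : Multipliable fun m : ℕ => 1 - z * p ^ (m + 1) := by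
    simpa only [hshift] using multipliable_one_sub_mul_pow hp (z * p)
  have hsplit := tprod_eq_zero_mul' (f := fun m : ℕ => 1 - z * p ^ m) htail
  simpa only [poch, hshift, pow_zero, mul_one] using hsplit

lemma theta_eq_neg_mul_theta_mul {p z : ℂ} (hp₀ : p ≠ 0) (hp : ‖p‖ < 1) (hz : z ≠ 0) :
    theta p z = -z * theta p (z * p) := by
  have hinv : p * (z * p)⁻¹ = z⁻¹ := by field_simp
  calc theta p z
      = (1 - z) * poch p (z * p) * poch p (z⁻¹ * p) := by
        rw [theta, poch_eq_one_sub_mul_poch hp z, mul_comm p]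
    _ = -z * (poch p (z * p) * ((1 - z⁻¹) * poch p (z⁻¹ * p))) := by
        field_simp
        ring
    _ = -z * theta p (z * p) := by
        rw [theta, hinv, ← poch_eq_one_sub_mul_poch hp]

section Shift

variable {τ : ℂ} (hτ : τ.re < 0)

include hτ

lemma norm_qsq_lt_one : ‖qsq τ‖ < 1 := by
  rw [qsq, norm_exp, Real.exp_lt_one_iff]
  simpa only [re_ofNat, im_ofNat, mul_re, zero_mul, sub_zero] using
    mul_neg_of_pos_of_neg two_pos hτ

lemma theta_exp_sub (y : ℂ) :
    theta (qsq τ) (exp (2 * (y - τ))) = -exp (2 * (y - τ)) * theta (qsq τ) (exp (2 * y)) := by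
  have hexp : exp (2 * (y - τ)) * qsq τ = exp (2 * y) := by
    rw [qsq, ← exp_add]
    ring_nf
  rw [← hexp]
  exact theta_eq_neg_mul_theta_mul (exp_ne_zero _) (norm_qsq_lt_one hτ) (exp_ne_zero _)

lemma theta_exp_sub_eq_zero_iff (y : ℂ) :
    theta (qsq τ) (exp (2 * (y - τ))) = 0 ↔ theta (qsq τ) (exp (2 * y)) = 0 := by
  simp [theta_exp_sub hτ, exp_ne_zero]

lemma theta_exp_sub_mul_theta_exp (y z : ℂ) :
    theta (qsq τ) (exp (2 * (y - τ))) * theta (qsq τ) (exp (2 * z)) =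
      exp (2 * (y - z)) *
        (theta (qsq τ) (exp (2 * y)) * theta (qsq τ) (exp (2 * (z - τ)))) := by
  have hexp : exp (2 * (y - τ)) = exp (2 * (y - z)) * exp (2 * (z - τ)) := by
    rw [← exp_add]
    ring_nf
  rw [theta_exp_sub hτ, theta_exp_sub hτ, hexp]
  ring

lemma prod_theta_exp_sub_mul_prod_theta_exp {ι : Type*} (S : Finset ι) (y z : ι → ℂ) :
    (∏ s ∈ S, theta (qsq τ) (exp (2 * (y s - τ)))) * ∏ s ∈ S, theta (qsq τ) (exp (2 * z s)) =
      exp (2 * ∑ s ∈ S, (y s - z s)) *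
        ((∏ s ∈ S, theta (qsq τ) (exp (2 * y s))) *
          ∏ s ∈ S, theta (qsq τ) (exp (2 * (z s - τ)))) := by
  simp only [Finset.mul_sum, exp_sum, ← Finset.prod_mul_distrib, theta_exp_sub_mul_theta_exp hτ]

end Shift

section ThetaQuotient

variable (τ η ξp ξm : ℂ) {M N : ℕ} (ℓ : Fin N → ℂ) (k : Fin M → Fin N) (i : Fin M)
  (t : Fin N → ℂ)

/-- The shift `aₛ` in the numerator factor `θ(e^{2(x + aₛ)})` of `u_{k;i}(x;t)`, for `s ≥ kᵢ`. The
factor containing `ψ_{k;i}` is given the index `s = kᵢ`, so that numerator and denominator have the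
same index set. -/
def numShift (s : Fin N) : ℂ :=
  if s = k i then psiC τ η ξp ξm ℓ k i - t s else -(ℓ s * η) - t s

/-- The shift `bₛ` in the denominator factor `θ(e^{2(x + bₛ)})` of `u_{k;i}(x;t)`, for `s ≥ kᵢ`. -/
def denShift (s : Fin N) : ℂ := ℓ s * η - t s

lemma ufun_eq_prod_div_prod (x : ℂ) :
    ufun τ η ξp ξm ℓ k i x t =
      exp (-t (k i)) *
        (∏ s ∈ Finset.Ici (k i), theta (qsq τ) (exp (2 * (x + numShift τ η ξp ξm ℓ k i t s)))) /
        ∏ s ∈ Finset.Ici (k i), theta (qsq τ) (exp (2 * (x + denShift η ℓ t s))) := by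
  have hself : x + numShift τ η ξp ξm ℓ k i t (k i) = x - t (k i) + psiC τ η ξp ξm ℓ k i := by
    rw [numShift, if_pos rfl]
    ring
  have hnum : ∀ s ∈ Finset.Ioi (k i),
      theta (qsq τ) (exp (2 * (x + numShift τ η ξp ξm ℓ k i t s))) =
        theta (qsq τ) (exp (2 * (x - t s - ℓ s * η))) := by
    intro s hs
    rw [numShift, if_neg (Finset.mem_Ioi.mp hs).ne']
    ring_nf
  have hden (s : Fin N) : x + denShift η ℓ t s = x - t s + ℓ s * η := by
    rw [denShift]
    ring
  simp only [ufun, Finset.filter_lt_eq_Ioi, Finset.filter_le_eq_Ici, hden, mul_assoc,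
    ← Finset.mul_prod_Ioi_eq_prod_Ici, Finset.prod_congr rfl hnum, hself]

lemma sum_numShift_sub_denShift :
    ∑ s ∈ Finset.Ici (k i), (numShift τ η ξp ξm ℓ k i t s - denShift η ℓ t s) =
      xiP τ η ξp + xiM η ξm + τ - 2 * ((M : ℂ) - ((i : ℕ) + 1)) * η := by
  have hself : numShift τ η ξp ξm ℓ k i t (k i) - denShift η ℓ t (k i) =
      psiC τ η ξp ξm ℓ k i - ℓ (k i) * η := by
    rw [numShift, if_pos rfl, denShift]
    ring
  have hgt : ∀ s ∈ Finset.Ioi (k i),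
      numShift τ η ξp ξm ℓ k i t s - denShift η ℓ t s = ℓ s * (-2 * η) := by
    intro s hs
    rw [numShift, if_neg (Finset.mem_Ioi.mp hs).ne', denShift]
    ring
  rw [← Finset.add_sum_Ioi_eq_sum_Ici, hself, Finset.sum_congr rfl hgt, ← Finset.sum_mul, psiC,
    Finset.filter_lt_eq_Ioi]
  ring

end ThetaQuotient

theorem stmt10_general {τ : ℂ} (hτ : τ.re < 0) (η ξp ξm : ℂ) {M N : ℕ} (ℓ : Fin N → ℂ)
    (k : Fin M → Fin N) (i : Fin M) (x : ℂ) (t : Fin N → ℂ)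
    (hden : ∀ s : Fin N, k i ≤ s → theta (qsq τ) (exp (2 * (x - t s + ℓ s * η))) ≠ 0) :
    ufun τ η ξp ξm ℓ k i (x - τ) t =
      qsq τ * exp (2 * (xiP τ η ξp + xiM η ξm) - 4 * ((M : ℂ) - ((i : ℕ) + 1)) * η) *
        ufun τ η ξp ξm ℓ k i x t := by
  set a := numShift τ η ξp ξm ℓ k i t
  set b := denShift η ℓ t with hb
  have hbx : ∀ s ∈ Finset.Ici (k i), theta (qsq τ) (exp (2 * (x + b s))) ≠ 0 := by
    intro s hs
    simpa only [hb, denShift, sub_add_eq_add_sub, add_sub_assoc] using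
      hden s (Finset.mem_Ici.mp hs)
  have hbxτ : ∀ s ∈ Finset.Ici (k i), theta (qsq τ) (exp (2 * (x + b s - τ))) ≠ 0 :=
    fun s hs => (theta_exp_sub_eq_zero_iff hτ _).not.mpr (hbx s hs)
  have hmult : exp (2 * ∑ s ∈ Finset.Ici (k i), ((x + a s) - (x + b s))) =
      qsq τ * exp (2 * (xiP τ η ξp + xiM η ξm) - 4 * ((M : ℂ) - ((i : ℕ) + 1)) * η) := by
    simp only [add_sub_add_left_eq_sub]
    rw [sum_numShift_sub_denShift, qsq, ← exp_add]
    ring_nf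
  have hcross := prod_theta_exp_sub_mul_prod_theta_exp hτ (Finset.Ici (k i))
    (fun s => x + a s) (fun s => x + b s)
  rw [hmult] at hcross
  rw [ufun_eq_prod_div_prod, ufun_eq_prod_div_prod, ← mul_div_assoc]
  simp only [sub_add_eq_add_sub]
  rw [div_eq_div_iff (Finset.prod_ne_zero_iff.mpr hbxτ) (Finset.prod_ne_zero_iff.mpr hbx)]
  linear_combination exp (-t (k i)) * hcross

/-- functional equation for `u_{k;i}(x − τ; t)`. -/
theorem stmt10 (τ η ξp ξm : ℂ) (hτ : τ.re < 0) (M N : ℕ) (hN : 1 ≤ N)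
    (ℓ : Fin N → ℂ) (k : Fin M → Fin N) (hk : Monotone k) (i : Fin M)
    (x : ℂ) (t : Fin N → ℂ)
    (h1 : ∀ s : Fin N, k i ≤ s → theta (qsq τ) (exp (2 * (x - t s + ℓ s * η))) ≠ 0)
    (h2 : ∀ s : Fin N, k i ≤ s → theta (qsq τ) (exp (2 * ((x - τ) - t s + ℓ s * η))) ≠ 0) :
    ufun τ η ξp ξm ℓ k i (x - τ) t =
      qsq τ * exp (2 * (xiP τ η ξp + xiM η ξm) - 4 * ((M : ℂ) - ((i : ℕ) + 1)) * η) *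
        ufun τ η ξp ξm ℓ k i x t := by
  exact stmt10_general hτ η ξp ξm ℓ k i x t h1

end BQKZ
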